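/- arXiv:1208.3818 — 2 statements merged into one kernel-verified Lean document; each statement's English description precedes it below -/
import Mathlib

section
/- If ψ_1 and ψ_2 are both admissible phases (i.e. both satisfy conditions (a)–(e)), then ψ_1 − ψ_2 vanishes to infinite order at (0,0): all partial derivatives of ψ_1 − ψ_2 in the 4n underlying real variables vanish at (0,0). In other words, the Taylor expansion of an admissible phase at (0,0) is uniquely determined. -/
open Complex Asymptotics

attribute [local instance] Classical.propDecidable

noncomputable section

/-- `ℂⁿ` as `Fin n → ℂ`. -/
abbrev Cn (n : ℕ) := Fin n → ℂ

/-- Wirtinger derivative `∂/∂z_j = (1/2)(∂/∂x_{2j-1} − i ∂/∂x_{2j})`. -/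
def wd {n : ℕ} (j : Fin n) (f : Cn n → ℂ) : Cn n → ℂ := fun z =>
  (1 / 2 : ℂ) *
    (fderiv ℝ f z (Pi.single j 1) - Complex.I * fderiv ℝ f z (Pi.single j Complex.I))

/-- Wirtinger derivative `∂/∂z̄_j = (1/2)(∂/∂x_{2j-1} + i ∂/∂x_{2j})`. -/
def wdb {n : ℕ} (j : Fin n) (f : Cn n → ℂ) : Cn n → ℂ := fun z =>
  (1 / 2 : ℂ) *
    (fderiv ℝ f z (Pi.single j 1) + Complex.I * fderiv ℝ f z (Pi.single j Complex.I))

/-- A real-valued function regarded as complex-valued. -/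
def cplx {n : ℕ} (φ : Cn n → ℝ) : Cn n → ℂ := fun z => (φ z : ℂ)

/-- `φ` is smooth and `φ(z) = Σ_j λ_j |z_j|² + O(|z|³)` as `z → 0`. -/
def PhiOK {n : ℕ} (lam : Fin n → ℝ) (φ : Cn n → ℝ) : Prop :=
  ContDiff ℝ (⊤ : ℕ∞) φ ∧
    (fun z : Cn n => φ z - ∑ j, lam j * Complex.normSq (z j)) =O[nhds 0] fun z => ‖z‖ ^ 3

/-- The conditions (a)–(e) on the phase function `ψ`. -/
def Admissible {n : ℕ} (lam : Fin n → ℝ) (φ : Cn n → ℝ) (ψ : Cn n → Cn n → ℂ) : Prop :=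
  ContDiff ℝ (⊤ : ℕ∞) (fun p : Cn n × Cn n => ψ p.1 p.2) ∧
  -- (a)
  (∀ z, ψ z z = 0) ∧
  (∀ z w, ψ z w = - (starRingEnd ℂ) (ψ w z)) ∧
  -- (b)
  (∃ c : ℝ, 0 < c ∧ ∀ z w, c * ‖z - w‖ ^ 2 ≤ (ψ z w).im) ∧
  -- (c): on the diagonal, ∂ψ/∂z̄_j = i ∂φ/∂z̄_j, ∂ψ/∂z_j = −i ∂φ/∂z_j,
  --      ∂ψ/∂w̄_j = −i ∂φ/∂z̄_j, ∂ψ/∂w_j = i ∂φ/∂z_j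
  (∀ (z : Cn n) (j : Fin n), wdb j (fun x => ψ x z) z = Complex.I * wdb j (cplx φ) z) ∧
  (∀ (z : Cn n) (j : Fin n), wd j (fun x => ψ x z) z = - Complex.I * wd j (cplx φ) z) ∧
  (∀ (z : Cn n) (j : Fin n), wdb j (fun w => ψ z w) z = - Complex.I * wdb j (cplx φ) z) ∧
  (∀ (z : Cn n) (j : Fin n), wd j (fun w => ψ z w) z = Complex.I * wd j (cplx φ) z) ∧
  -- (d): Σ_j (i ∂ψ/∂z̄_j + ∂φ/∂z̄_j)(−i ∂ψ/∂z_j + ∂φ/∂z_j) vanishes to infinite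
  --      order on the diagonal
  (∀ (m : ℕ) (z : Cn n),
    iteratedFDeriv ℝ m
      (fun p : Cn n × Cn n =>
        ∑ j, (Complex.I * wdb j (fun x => ψ x p.2) p.1 + wdb j (cplx φ) p.1) *
             (- Complex.I * wd j (fun x => ψ x p.2) p.1 + wd j (cplx φ) p.1))
      (z, z) = 0) ∧
  -- (e)
  ((fun p : Cn n × Cn n =>
      ψ p.1 p.2 -
        (Complex.I * ∑ j, ((|lam j| * Complex.normSq (p.1 j - p.2 j) : ℝ) : ℂ)
          + Complex.I * ∑ j, ((lam j : ℝ) : ℂ) *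
              ((starRingEnd ℂ) (p.1 j) * p.2 j - (starRingEnd ℂ) (p.2 j) * p.1 j)))
    =O[nhds 0] fun p => ‖p‖ ^ 3)

section gen
variable {V : Type*} [NormedAddCommGroup V] [NormedSpace ℝ V]

def JJ : ℕ → (V → ℂ) → Prop
  | 0, f => ContDiff ℝ (⊤ : ℕ∞) f
  | (N+1), f => ContDiff ℝ (⊤ : ℕ∞) f ∧ f 0 = 0 ∧ ∀ v : V, JJ N (fun p => fderiv ℝ f p v)

lemma JJ.smooth {N : ℕ} {f : V → ℂ} (h : JJ N f) : ContDiff ℝ (⊤ : ℕ∞) f := by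
  cases N with
  | zero => exact h
  | succ N => exact h.1

lemma smooth_fderiv {f : V → ℂ} (h : ContDiff ℝ (⊤ : ℕ∞) f) (v : V) :
    ContDiff ℝ (⊤ : ℕ∞) (fun p => fderiv ℝ f p v) := by
  have : ContDiff ℝ (⊤ : ℕ∞) (fderiv ℝ f) := h.fderiv_right (by simp)
  exact this.clm_apply contDiff_const

lemma smooth_diff {f : V → ℂ} (h : ContDiff ℝ (⊤ : ℕ∞) f) : Differentiable ℝ f :=
  h.differentiable (by simp)

lemma JJ.pred {N : ℕ} : ∀ {f : V → ℂ}, JJ (N+1) f → JJ N f := by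
  induction N with
  | zero => intro f h; exact h.1
  | succ N ih => intro f h; exact ⟨h.1, h.2.1, fun v => ih (h.2.2 v)⟩

lemma JJ.fd {N : ℕ} {f : V → ℂ} (h : JJ N f) (v : V) : JJ (N-1) (fun p => fderiv ℝ f p v) := by
  cases N with
  | zero => exact smooth_fderiv h v
  | succ N => exact h.2.2 v

lemma JJ.add {N : ℕ} : ∀ {f g : V → ℂ}, JJ N f → JJ N g → JJ N (fun p => f p + g p) := by
  induction N with
  | zero => intro f g hf hg; exact ContDiff.add hf hg
  | succ N ih =>
    intro f g hf hg
    refine ⟨hf.1.add hg.1, by simp [hf.2.1, hg.2.1], fun v => ?_⟩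
    have := ih (hf.2.2 v) (hg.2.2 v)
    convert this using 2 with p
    rw [fderiv_fun_add (smooth_diff hf.1 p) (smooth_diff hg.1 p)]; rfl

lemma JJ.mul' : ∀ (N k l : ℕ) {f g : V → ℂ}, N ≤ k + l → JJ k f → JJ l g →
    JJ N (fun p => f p * g p) := by
  intro N
  induction N with
  | zero => intro k l f g _ hf hg; exact hf.smooth.mul hg.smooth
  | succ N ih =>
    intro k l f g h hf hg
    refine ⟨hf.smooth.mul hg.smooth, ?_, fun v => ?_⟩
    · rcases Nat.eq_zero_or_pos k with hk | hk
      · obtain ⟨l, rfl⟩ : ∃ l', l = l' + 1 := ⟨l - 1, by omega⟩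
        simp [hg.2.1]
      · obtain ⟨k, rfl⟩ : ∃ l', k = l' + 1 := ⟨k - 1, by omega⟩
        simp [hf.2.1]
    · have e : (fun p => fderiv ℝ (fun p => f p * g p) p v) =
          fun p => f p * fderiv ℝ g p v + fderiv ℝ f p v * g p := by
        funext p
        rw [fderiv_fun_mul (smooth_diff hf.smooth p) (smooth_diff hg.smooth p)]
        simp; ring
      rw [e]
      exact (ih k (l-1) (by omega) hf (hg.fd v)).add (ih (k-1) l (by omega) (hf.fd v) hg)

lemma JJ.cmul {N : ℕ} {f : V → ℂ} (c : ℂ) (h : JJ N f) : JJ N (fun p => c * f p) :=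
  JJ.mul' N 0 N (by omega) (show JJ 0 (fun _ : V => c) from contDiff_const) h

lemma JJ.sub {N : ℕ} {f g : V → ℂ} (hf : JJ N f) (hg : JJ N g) : JJ N (fun p => f p - g p) := by
  convert hf.add (hg.cmul (-1)) using 2; ring

lemma JJ.zero (N : ℕ) : JJ N (fun _ : V => (0:ℂ)) := by
  induction N with
  | zero => exact contDiff_const
  | succ N ih => exact ⟨contDiff_const, rfl, fun v => by simpa using ih⟩

lemma JJ.sum {ι : Type*} {N : ℕ} (s : Finset ι) {f : ι → V → ℂ} (h : ∀ i ∈ s, JJ N (f i)) :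
    JJ N (fun p => ∑ i ∈ s, f i p) := by
  induction s using Finset.induction_on with
  | empty => simpa using JJ.zero N
  | insert a s ha ih =>
    simp only [Finset.sum_insert ha]
    exact (h a (by simp)).add (ih fun i hi => h i (by simp [hi]))

lemma JJ_iff (N : ℕ) : ∀ (f : V → ℂ), ContDiff ℝ (⊤ : ℕ∞) f →
    (JJ N f ↔ ∀ m < N, iteratedFDeriv ℝ m f 0 = 0) := by
  induction N with
  | zero => intro f hf; simp [JJ, hf]
  | succ N ih =>
    intro f hf
    have key : ∀ (m : ℕ) (v : V) (w : Fin m → V),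
        iteratedFDeriv ℝ m (fun p => fderiv ℝ f p v) 0 w
          = iteratedFDeriv ℝ (m+1) f 0 (Fin.snoc w v) := by
      intro m v w
      rw [iteratedFDeriv_succ_apply_right]
      have h1 : ContDiff ℝ (⊤ : ℕ∞) (fderiv ℝ f) := hf.fderiv_right (by simp)
      have := (ContinuousLinearMap.apply ℝ ℂ v).iteratedFDeriv_comp_left
        (f := fderiv ℝ f) (x := (0:V)) (n := (⊤ : ℕ∞)) h1.contDiffAt (i := m) (by exact_mod_cast le_top)
      have e : (⇑(ContinuousLinearMap.apply ℝ ℂ v) ∘ fderiv ℝ f) = fun p => fderiv ℝ f p v := by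
        funext p; rfl
      rw [e] at this
      rw [this]
      simp [Fin.init_snoc]
    constructor
    · intro h m hm
      cases m with
      | zero => ext w; simp [h.2.1]
      | succ m =>
        ext w
        have := (ih _ (smooth_fderiv hf (w (Fin.last m)))).1 (h.2.2 _) m (by omega)
        have k := key m (w (Fin.last m)) (Fin.init w)
        rw [this, Fin.snoc_init_self] at k
        simpa using k.symm
    · intro h
      refine ⟨hf, ?_, fun v => (ih _ (smooth_fderiv hf v)).2 fun m hm => ?_⟩
      · have := h 0 (by omega)
        have := congrArg (fun T => T (fun _ => 0)) this
        simpa using this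
      · ext w
        rw [key, h (m+1) (by omega)]; rfl

/-- complex derivation -/
def cd (x : V × V) (f : V → ℂ) : V → ℂ := fun p => fderiv ℝ f p x.1 + I * fderiv ℝ f p x.2

lemma JJ.cd {N : ℕ} {f : V → ℂ} (h : JJ N f) (x : V × V) : JJ (N-1) (cd x f) :=
  (h.fd x.1).add ((h.fd x.2).cmul I)

lemma cd_smooth {f : V → ℂ} (h : ContDiff ℝ (⊤ : ℕ∞) f) (x : V × V) :
    ContDiff ℝ (⊤ : ℕ∞) (cd x f) := JJ.cd (N := 0) h x

lemma cd_add {f g : V → ℂ} (hf : ContDiff ℝ (⊤ : ℕ∞) f) (hg : ContDiff ℝ (⊤ : ℕ∞) g) (x : V × V) :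
    cd x (fun p => f p + g p) = fun p => cd x f p + cd x g p := by
  funext p
  simp only [cd]
  rw [fderiv_fun_add (smooth_diff hf p) (smooth_diff hg p)]; simp; ring

lemma cd_mul {f g : V → ℂ} (hf : ContDiff ℝ (⊤ : ℕ∞) f) (hg : ContDiff ℝ (⊤ : ℕ∞) g) (x : V × V) :
    cd x (fun p => f p * g p) = fun p => cd x f p * g p + f p * cd x g p := by
  funext p
  simp only [cd]
  rw [fderiv_fun_mul (smooth_diff hf p) (smooth_diff hg p)]; simp; ring

lemma cd_const (c : ℂ) (x : V × V) : cd x (fun _ : V => c) = fun _ => 0 := by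
  funext p; simp [cd]

lemma cd_cmul {f : V → ℂ} (hf : ContDiff ℝ (⊤ : ℕ∞) f) (c : ℂ) (x : V × V) :
    cd x (fun p => c * f p) = fun p => c * cd x f p := by
  rw [cd_mul contDiff_const hf, cd_const]; simp

lemma cd_sub {f g : V → ℂ} (hf : ContDiff ℝ (⊤ : ℕ∞) f) (hg : ContDiff ℝ (⊤ : ℕ∞) g) (x : V × V) :
    cd x (fun p => f p - g p) = fun p => cd x f p - cd x g p := by
  funext p
  simp only [cd]
  rw [fderiv_fun_sub (smooth_diff hf p) (smooth_diff hg p)]; simp; ring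

lemma cd_sum {ι : Type*} (s : Finset ι) {f : ι → V → ℂ}
    (h : ∀ i, ContDiff ℝ (⊤ : ℕ∞) (f i)) (x : V × V) :
    cd x (fun p => ∑ i ∈ s, f i p) = fun p => ∑ i ∈ s, cd x (f i) p := by
  funext p
  simp only [cd]
  rw [fderiv_fun_sum (fun i _ => smooth_diff (h i) p)]
  simp [Finset.sum_add_distrib, Finset.mul_sum]

lemma cd_clm (a : V →L[ℝ] ℂ) (x : V × V) : cd x (fun p => a p) = fun _ => a x.1 + I * a x.2 := by
  funext p
  have : fderiv ℝ (fun p => a p) p = a := a.fderiv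
  simp [cd, this]

lemma cd_add_vec (f : V → ℂ) (x y : V × V) : cd (x + y) f = fun p => cd x f p + cd y f p := by
  funext p; simp [cd]; ring

lemma fd_comm {f : V → ℂ} (hf : ContDiff ℝ (⊤ : ℕ∞) f) (v w p : V) :
    fderiv ℝ (fun q => fderiv ℝ f q v) p w = fderiv ℝ (fun q => fderiv ℝ f q w) p v := by
  have h1 : ContDiff ℝ (⊤ : ℕ∞) (fderiv ℝ f) := hf.fderiv_right (by simp)
  have hd : DifferentiableAt ℝ (fderiv ℝ f) p := h1.differentiable (by simp) p
  have e : ∀ v w : V, fderiv ℝ (fun q => fderiv ℝ f q v) p w = fderiv ℝ (fderiv ℝ f) p w v := by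
    intro v w
    rw [fderiv_clm_apply hd (differentiableAt_const v)]
    simp
  rw [e, e]
  have : IsSymmSndFDerivAt ℝ f p := (hf.contDiffAt).isSymmSndFDerivAt
    (by simp only [minSmoothness_of_isRCLikeNormedField]; exact WithTop.coe_le_coe.2 le_top)
  exact this w v

lemma cd_comm {f : V → ℂ} (hf : ContDiff ℝ (⊤ : ℕ∞) f) (x y : V × V) :
    cd x (cd y f) = cd y (cd x f) := by
  have e : ∀ x y : V × V, cd x (cd y f) = fun p =>
      fderiv ℝ (fun q => fderiv ℝ f q y.1) p x.1 + I * fderiv ℝ (fun q => fderiv ℝ f q y.1) p x.2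
      + I * (fderiv ℝ (fun q => fderiv ℝ f q y.2) p x.1
        + I * fderiv ℝ (fun q => fderiv ℝ f q y.2) p x.2) := by
    intro x y
    have : cd y f = fun p => (fun q => fderiv ℝ f q y.1) p + I * (fun q => fderiv ℝ f q y.2) p := rfl
    rw [this, cd_add (smooth_fderiv hf _) (contDiff_const.mul (smooth_fderiv hf _)),
      cd_cmul (smooth_fderiv hf _)]
    rfl
  rw [e, e]
  funext p
  rw [fd_comm hf x.1 y.1, fd_comm hf x.1 y.2, fd_comm hf x.2 y.1, fd_comm hf x.2 y.2]
  ring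

lemma step1 {ι : Type*} [Fintype ι] (a : ι → V →L[ℝ] ℂ) (c : ι → ℝ) (hc : ∀ j, 0 < c j)
    (X : ι → V × V)
    (hXa : ∀ j k, a k (X j).1 + I * a k (X j).2 = if j = k then 1 else 0)
    (hspan : ∀ N (f : V → ℂ), ContDiff ℝ (⊤ : ℕ∞) f → f 0 = 0 → (∀ j, JJ N (cd (X j) f)) →
      (∀ y : V × V, (∀ k, a k y.1 + I * a k y.2 = 0) → JJ N (cd y f)) → JJ (N+1) f) :
    ∀ N (s : ℝ), 0 ≤ s → ∀ u : V → ℂ, JJ N u →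
      JJ (N+1) (fun p => s * u p + ∑ j, c j * (a j p * cd (X j) u p)) →
      (∀ j, JJ N (cd (X j) u)) ∧ (0 < s → JJ (N+1) u) := by
  intro N
  induction N with
  | zero =>
    intro s hs u hu h
    refine ⟨fun j => cd_smooth hu _, fun hs => ⟨hu, ?_, fun v => smooth_fderiv hu v⟩⟩
    have := h.2.1
    simpa [hs.ne'] using this
  | succ N ih =>
    intro s hs u hu h
    have hus := hu.smooth
    have sm : ∀ j, ContDiff ℝ (⊤ : ℕ∞) (fun p => (c j : ℂ) * (a j p * cd (X j) u p)) := fun j =>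
      contDiff_const.mul ((a j).contDiff.mul (cd_smooth hus _))
    have main : ∀ y : V × V, cd y (fun p => s * u p + ∑ j, c j * (a j p * cd (X j) u p)) =
      fun p => s * cd y u p + ∑ j, (c j * (a j p * cd (X j) (cd y u) p)
        + c j * ((a j y.1 + I * a j y.2) * cd (X j) u p)) := by
      intro y
      rw [cd_add (contDiff_const.mul hus) (ContDiff.sum fun j _ => sm j), cd_cmul hus, cd_sum _ sm]
      funext p
      congr 1
      refine Finset.sum_congr rfl fun j _ => ?_
      rw [cd_cmul ((a j).contDiff.mul (cd_smooth hus _)), cd_mul (a j).contDiff (cd_smooth hus _),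
        cd_clm, cd_comm hus]
      ring
    have hX : ∀ j, JJ (N+1) (cd (X j) u) := by
      intro k
      have h2 : JJ (N+1) _ := h.cd (X k)
      rw [main] at h2
      refine (ih (s + c k) (by linarith [hc k]) (cd (X k) u) (hu.cd _) ?_).2 (by linarith [hc k])
      convert h2 using 2 with p
      simp only [hXa, Finset.sum_add_distrib]
      simp
      ring
    refine ⟨hX, fun hs' => hspan _ _ hus hu.2.1 hX fun y hy => ?_⟩
    have h2 : JJ (N+1) _ := h.cd y
    rw [main] at h2
    refine (ih s hs (cd y u) (hu.cd _) ?_).2 hs'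
    convert h2 using 2 with p
    simp [hy]

lemma step3 {ι : Type*} (X Y X' Y' : ι → V × V) (Δ : Set V) (h0 : (0:V) ∈ Δ)
    (hspan : ∀ N (f : V → ℂ), ContDiff ℝ (⊤ : ℕ∞) f → f 0 = 0 → (∀ j, JJ N (cd (X j) f)) →
      (∀ j, JJ N (cd (Y j) f)) → (∀ j, JJ N (cd (X' j) f)) → (∀ j, JJ N (cd (Y' j) f)) →
      JJ (N+1) f)
    (hΔ : ∀ f : V → ℂ, ContDiff ℝ (⊤ : ℕ∞) f → (∀ p ∈ Δ, f p = 0) →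
      ∀ j, ∀ p ∈ Δ, cd (X j + X' j) f p = 0 ∧ cd (Y j + Y' j) f p = 0) :
    ∀ N (u : V → ℂ), JJ N u → (∀ p ∈ Δ, u p = 0) → (∀ j, JJ N (cd (X j) u)) →
      (∀ j, JJ N (cd (Y j) u)) → JJ (N+1) u := by
  intro N
  induction N with
  | zero => intro u hu hd _ _; exact ⟨hu, hd _ h0, fun v => smooth_fderiv hu v⟩
  | succ N ih =>
    intro u hu hd hX hY
    have hs := hu.smooth
    refine hspan _ _ hs (hd _ h0) hX hY (fun j => ?_) (fun j => ?_)
    · have : JJ (N+1) (cd (X j + X' j) u) := by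
        refine ih _ (hu.cd _) (fun p hp => (hΔ u hs hd j p hp).1) (fun k => ?_) (fun k => ?_)
        · rw [cd_comm hs]; exact (hX k).cd _
        · rw [cd_comm hs]; exact (hY k).cd _
      convert this.sub (hX j) using 1
      rw [cd_add_vec]; funext p; ring
    · have : JJ (N+1) (cd (Y j + Y' j) u) := by
        refine ih _ (hu.cd _) (fun p hp => (hΔ u hs hd j p hp).2) (fun k => ?_) (fun k => ?_)
        · rw [cd_comm hs]; exact (hX k).cd _
        · rw [cd_comm hs]; exact (hY k).cd _
      convert this.sub (hY j) using 1
      rw [cd_add_vec]; funext p; ring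
end gen

section gen2
variable {V : Type*} [NormedAddCommGroup V] [NormedSpace ℝ V]

lemma line_zero {f : V → ℂ} (hf : ContDiff ℝ (⊤ : ℕ∞) f)
    (h : f =O[nhds 0] fun p => ‖p‖ ^ 3) :
    f 0 = 0 ∧ (∀ v, fderiv ℝ f 0 v = 0) ∧
      ∀ v, fderiv ℝ (fun p => fderiv ℝ f p v) 0 v = 0 := by
  have h0 : f 0 = 0 := by
    obtain ⟨C, hC⟩ := h.bound
    have := hC.self_of_nhds
    simpa using this
  have h1 : fderiv ℝ f 0 = 0 := by
    have : HasFDerivAt f (0 : V →L[ℝ] ℂ) 0 := by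
      rw [hasFDerivAt_iff_isLittleO_nhds_zero]
      simp only [zero_add, h0, sub_zero, zero_apply]
      refine h.trans_isLittleO ?_
      have := (isLittleO_norm_pow_id (E' := V) (n := 3) (by norm_num))
      simpa using this
    exact this.fderiv
  refine ⟨h0, fun v => by simp [h1], fun v => ?_⟩
  set g : ℝ → ℂ := fun t => f (t • v) with hg
  have hl : ∀ t : ℝ, HasDerivAt (fun t : ℝ => t • v) v t := fun t => by
    simpa using (hasDerivAt_id t).smul_const v
  have hgs : ContDiff ℝ (⊤ : ℕ∞) g := hf.comp (contDiff_id.smul contDiff_const)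
  have d1 : deriv g = fun t => fderiv ℝ f (t • v) v := by
    funext t
    exact ((smooth_diff hf (t • v)).hasFDerivAt.comp_hasDerivAt t (hl t)).deriv
  have d2 : deriv (deriv g) 0 = fderiv ℝ (fun p => fderiv ℝ f p v) 0 v := by
    rw [d1]
    have := ((smooth_diff (smooth_fderiv hf v) ((0:ℝ) • v)).hasFDerivAt.comp_hasDerivAt 0 (hl 0)).deriv
    simpa [Function.comp_def] using this
  have ht := taylor_isLittleO_univ (f := g) (x₀ := 0) (n := 2) (hgs.of_le (WithTop.coe_le_coe.2 le_top))
  have e : ∀ t, taylorWithinEval g 2 Set.univ 0 t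
      = ((t : ℂ)) ^ 2 * (fderiv ℝ (fun p => fderiv ℝ f p v) 0 v / 2) := by
    intro t
    rw [taylorWithinEval_succ, taylorWithinEval_succ, taylor_within_zero_eval,
      iteratedDerivWithin_univ, iteratedDerivWithin_univ, zero_add, iteratedDeriv_one,
      iteratedDeriv_succ, iteratedDeriv_one, d2, d1]
    simp [hg, h0, h1]
    norm_num
    ring
  simp only [e, sub_zero] at ht
  have hgo : g =o[nhds 0] fun t : ℝ => t ^ 2 := by
    have c : Filter.Tendsto (fun t : ℝ => t • v) (nhds 0) (nhds 0) := by
      have := (hl 0).continuousAt.tendsto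
      simpa using this
    have := h.comp_tendsto c
    refine this.trans_isLittleO ?_
    have k : (fun t : ℝ => t ^ 3) =o[nhds 0] fun t : ℝ => t ^ 2 := isLittleO_pow_pow (by norm_num)
    have k2 : ((fun p : V => ‖p‖ ^ 3) ∘ fun t : ℝ => t • v) =O[nhds 0] fun t : ℝ => t ^ 3 := by
      refine IsBigO.of_bound (‖v‖ ^ 3) (Filter.Eventually.of_forall fun t => ?_)
      simp [norm_smul, mul_pow, mul_comm]
    exact k2.trans_isLittleO k
  have hT := hgo.sub ht
  simp only [sub_sub_cancel] at hT
  by_contra hne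
  have hT2 : (fun t : ℝ => ((t:ℂ)) ^ 2) =o[nhds 0] fun t : ℝ => t ^ 2 := by
    have := hT.const_mul_left ((fderiv ℝ (fun p => fderiv ℝ f p v) 0 v / 2)⁻¹)
    refine this.congr_left fun t => ?_
    field_simp
  have hT3 : (fun t : ℝ => t ^ 2) =o[nhds 0] fun t : ℝ => t ^ 2 := by
    refine IsLittleO.congr_left (f₁ := fun t : ℝ => ‖((t:ℂ)) ^ 2‖) hT2.norm_left fun t => ?_
    simp
  refine isLittleO_irrefl (l := nhds (0:ℝ)) ?_ hT3
  have fr : ∃ᶠ t : ℝ in nhdsWithin 0 {0}ᶜ, t ^ 2 ≠ 0 := by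
    refine Filter.Eventually.frequently ?_
    filter_upwards [self_mem_nhdsWithin] with t ht
    exact pow_ne_zero _ ht
  exact fr.filter_mono nhdsWithin_le_nhds

lemma JJ3_of_isBigO {f : V → ℂ} (hf : ContDiff ℝ (⊤ : ℕ∞) f)
    (h : f =O[nhds 0] fun p => ‖p‖ ^ 3) : JJ 3 f := by
  obtain ⟨h0, h1, h2⟩ := line_zero hf h
  refine ⟨hf, h0, fun v => ⟨smooth_fderiv hf v, h1 v, fun w =>
    ⟨smooth_fderiv (smooth_fderiv hf v) w, ?_, fun x =>
      smooth_fderiv (smooth_fderiv (smooth_fderiv hf v) w) x⟩⟩⟩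
  have a := h2 (v + w)
  have e : (fun p => fderiv ℝ f p (v + w)) = fun p => fderiv ℝ f p v + fderiv ℝ f p w := by
    funext p; simp
  rw [e, fderiv_fun_add (smooth_diff (smooth_fderiv hf v) 0) (smooth_diff (smooth_fderiv hf w) 0)] at a
  simp only [add_apply, map_add, h2] at a
  rw [fd_comm hf w v] at a
  have : (2:ℂ) * fderiv ℝ (fun p => fderiv ℝ f p v) 0 w = 0 := by rw [← a]; ring
  simpa using this
end gen2

section conc
variable {n : ℕ}

def dz (ε : ℝ) (j : Fin n) : (Cn n × Cn n) × (Cn n × Cn n) :=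
  ((Pi.single j (1/2), 0), (Pi.single j (ε * I / 2), 0))
def dw (ε : ℝ) (j : Fin n) : (Cn n × Cn n) × (Cn n × Cn n) :=
  ((0, Pi.single j (1/2)), (0, Pi.single j (ε * I / 2)))

lemma smul_single (r : ℝ) (j : Fin n) (c : ℂ) :
    (Pi.single j ((r:ℂ) * c) : Cn n) = r • Pi.single j c := by
  rw [← Pi.single_smul]; simp

lemma cd_dz (ε : ℝ) (j : Fin n) (f : Cn n × Cn n → ℂ) (p) : cd (dz ε j) f p =
    (1/2 : ℂ) * (fderiv ℝ f p (Pi.single j 1, 0) + ε * (I * fderiv ℝ f p (Pi.single j I, 0))) := by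
  have e1 : ((Pi.single j (1/2), 0) : Cn n × Cn n) = (1/2 : ℝ) • (Pi.single j 1, 0) := by
    rw [Prod.smul_mk, ← smul_single]; simp
  have e2 : ((Pi.single j (ε * I / 2), 0) : Cn n × Cn n) = (ε/2 : ℝ) • (Pi.single j I, 0) := by
    rw [Prod.smul_mk, ← smul_single]; simp; ring_nf
  simp only [cd, dz, e1, e2, map_smul, real_smul]
  push_cast; ring

lemma cd_dw (ε : ℝ) (j : Fin n) (f : Cn n × Cn n → ℂ) (p) : cd (dw ε j) f p =
    (1/2 : ℂ) * (fderiv ℝ f p (0, Pi.single j 1) + ε * (I * fderiv ℝ f p (0, Pi.single j I))) := by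
  have e1 : ((0, Pi.single j (1/2)) : Cn n × Cn n) = (1/2 : ℝ) • (0, Pi.single j 1) := by
    rw [Prod.smul_mk, ← smul_single]; simp
  have e2 : ((0, Pi.single j (ε * I / 2)) : Cn n × Cn n) = (ε/2 : ℝ) • (0, Pi.single j I) := by
    rw [Prod.smul_mk, ← smul_single]; simp; ring_nf
  simp only [cd, dw, e1, e2, map_smul, real_smul]
  push_cast; ring

lemma vec_dec (z : Cn n) : z = ∑ j, ((z j).re • (Pi.single j 1 : Cn n) + (z j).im • (Pi.single j I : Cn n)) := by
  funext k
  simp [Finset.sum_apply, Finset.sum_add_distrib, Pi.single_apply]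

lemma span4 (ε : Fin n → ℝ) (hε : ∀ j, ε j * ε j = 1) (N : ℕ) (f : Cn n × Cn n → ℂ)
    (hf : ContDiff ℝ (⊤ : ℕ∞) f) (h0 : f 0 = 0)
    (h1 : ∀ j, JJ N (cd (dz (ε j) j) f)) (h2 : ∀ j, JJ N (cd (dw (-ε j) j) f))
    (h3 : ∀ j, JJ N (cd (dw (ε j) j) f)) (h4 : ∀ j, JJ N (cd (dz (-ε j) j) f)) :
    JJ (N+1) f := by
  refine ⟨hf, h0, fun v => ?_⟩
  have hε' : ∀ j, (ε j : ℂ) * ε j = 1 := fun j => by exact_mod_cast hε j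
  have e : (fun p => fderiv ℝ f p v) = fun p => ∑ j, (
      (((v.1 j).re : ℂ) * (cd (dz (ε j) j) f p + cd (dz (-ε j) j) f p)
      + ((v.1 j).im * (-(ε j) * I)) * (cd (dz (ε j) j) f p - cd (dz (-ε j) j) f p))
      + (((v.2 j).re : ℂ) * (cd (dw (ε j) j) f p + cd (dw (-ε j) j) f p)
      + ((v.2 j).im * (-(ε j) * I)) * (cd (dw (ε j) j) f p - cd (dw (-ε j) j) f p))) := by
    funext p
    have hv : v = ∑ j, (((v.1 j).re • ((Pi.single j 1, 0) : Cn n × Cn n)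
        + (v.1 j).im • (Pi.single j I, 0)) + ((v.2 j).re • ((0, Pi.single j 1) : Cn n × Cn n)
        + (v.2 j).im • (0, Pi.single j I))) := by
      refine Prod.ext ?_ ?_
      · rw [Prod.fst_sum]; simpa using vec_dec v.1
      · rw [Prod.snd_sum]; simpa using vec_dec v.2
    conv_lhs => rw [hv, map_sum]
    refine Finset.sum_congr rfl fun j _ => ?_
    simp only [cd_dz, cd_dw, map_add, map_smul, real_smul]
    push_cast
    have hI := I_mul_I
    linear_combination (-(↑(v.1 j).im * fderiv ℝ f p (Pi.single j I, 0)) -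
      ↑(v.2 j).im * fderiv ℝ f p (0, Pi.single j I)) * hε' j + ((ε j : ℂ)* ε j) * (↑(v.1 j).im * fderiv ℝ f p (Pi.single j I, 0) +
      ↑(v.2 j).im * fderiv ℝ f p (0, Pi.single j I)) * hI
  rw [e]
  refine JJ.sum _ fun j _ => ?_
  exact ((((h1 j).add (h4 j)).cmul _).add (((h1 j).sub (h4 j)).cmul _)).add
    ((((h3 j).add (h2 j)).cmul _).add (((h3 j).sub (h2 j)).cmul _))

def zl (k : Fin n) : (Cn n × Cn n) →L[ℝ] ℂ :=
  (ContinuousLinearMap.proj (R := ℝ) (φ := fun _ : Fin n => ℂ) k).comp (ContinuousLinearMap.fst ℝ (Cn n) (Cn n))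
def wl (k : Fin n) : (Cn n × Cn n) →L[ℝ] ℂ :=
  (ContinuousLinearMap.proj (R := ℝ) (φ := fun _ : Fin n => ℂ) k).comp (ContinuousLinearMap.snd ℝ (Cn n) (Cn n))
def cj (l : (Cn n × Cn n) →L[ℝ] ℂ) : (Cn n × Cn n) →L[ℝ] ℂ := (conjCLE : ℂ →L[ℝ] ℂ).comp l

@[simp] lemma zl_apply (k : Fin n) (p : Cn n × Cn n) : zl k p = p.1 k := rfl
@[simp] lemma wl_apply (k : Fin n) (p : Cn n × Cn n) : wl k p = p.2 k := rfl
@[simp] lemma cj_apply (l : (Cn n × Cn n) →L[ℝ] ℂ) (p : Cn n × Cn n) :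
  cj l p = (starRingEnd ℂ) (l p) := rfl

def aa (ε : ℝ) (k : Fin n) : (Cn n × Cn n) →L[ℝ] ℂ :=
  ((1 - ε)/2) • (zl k - wl k) + ((1 + ε)/2) • (cj (zl k) - cj (wl k))

lemma aa_dz (ε δ : ℝ) (j k : Fin n) :
    aa ε k (dz δ j).1 + I * aa ε k (dz δ j).2 = if j = k then ((1 + ε * δ) / 2 : ℂ) else 0 := by
  by_cases h : j = k
  · subst h
    simp [aa, dz, map_ofNat]
    linear_combination (-ε * δ/2 : ℂ) * I_mul_I
  · simp [aa, dz, h, Pi.single_apply, Ne.symm h]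

lemma aa_dw (ε δ : ℝ) (j k : Fin n) :
    aa ε k (dw δ j).1 + I * aa ε k (dw δ j).2 = if j = k then (-(1 + ε * δ) / 2 : ℂ) else 0 := by
  by_cases h : j = k
  · subst h
    simp [aa, dw, map_ofNat]
    linear_combination (ε * δ/2 : ℂ) * I_mul_I
  · simp [aa, dw, h, Pi.single_apply, Ne.symm h]

lemma conc1 (ε : Fin n → ℝ) (hε : ∀ j, ε j * ε j = 1) (c : Fin n → ℝ) (hc : ∀ j, 0 < c j)
    (N : ℕ) (u : Cn n × Cn n → ℂ) (hu : JJ N u)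
    (h : JJ (N+1) (fun p => ∑ j, c j * (aa (ε j) j p * cd (dz (ε j) j) u p))) (j : Fin n) :
    JJ N (cd (dz (ε j) j) u) := by
  have hε' : ∀ j, (ε j : ℂ) * ε j = 1 := fun j => by exact_mod_cast hε j
  refine (step1 (fun k => aa (ε k) k) c hc (fun j => dz (ε j) j) ?_ ?_ N 0 le_rfl u hu
    (by simpa using h)).1 j
  · intro j k
    rw [aa_dz]
    by_cases h : j = k
    · subst h; simp [hε']; 
    · simp [h]
  · intro N f hf h0 hX hY
    have h2 : ∀ j, JJ N (cd (dw (-ε j) j) f) := fun j => hY _ fun k => by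
      rw [aa_dw]; split_ifs with h
      · subst h; simp [hε']
      · rfl
    have h4 : ∀ j, JJ N (cd (dz (-ε j) j) f) := fun j => hY _ fun k => by
      rw [aa_dz]; split_ifs with h
      · subst h; simp [hε']
      · rfl
    have h3 : ∀ j, JJ N (cd (dz (ε j) j + dw (ε j) j) f) := fun j => hY _ fun k => by
      have a := aa_dz (ε k) (ε j) j k
      have b := aa_dw (ε k) (ε j) j k
      simp only [Prod.fst_add, Prod.snd_add, map_add]
      have : ∀ x y z w : ℂ, x + y + I * (z + w) = (x + I * z) + (y + I * w) := by intros; ring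
      rw [this, a, b]
      split_ifs <;> ring
    refine span4 ε hε N f hf h0 hX h2 (fun j => ?_) h4
    convert (h3 j).sub (hX j) using 1
    rw [cd_add_vec]; funext p; ring

lemma fderiv_sw {f : Cn n × Cn n → ℂ} (hf : ContDiff ℝ (⊤ : ℕ∞) f) (p v : Cn n × Cn n) :
    fderiv ℝ (fun p : Cn n × Cn n => (starRingEnd ℂ) (f p.swap)) p v
      = (starRingEnd ℂ) (fderiv ℝ f p.swap v.swap) := by
  let S : (Cn n × Cn n) →L[ℝ] (Cn n × Cn n) :=
    (ContinuousLinearMap.snd ℝ (Cn n) (Cn n)).prod (ContinuousLinearMap.fst ℝ (Cn n) (Cn n))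
  have h1 : HasFDerivAt (fun p => f (S p)) ((fderiv ℝ f (S p)).comp S) p :=
    (smooth_diff hf (S p)).hasFDerivAt.comp p S.hasFDerivAt
  have h2 := ((conjCLE : ℂ →L[ℝ] ℂ).hasFDerivAt (x := f (S p))).comp p h1
  have := h2.fderiv
  change fderiv ℝ ((conjCLE : ℂ →L[ℝ] ℂ) ∘ fun p => f (S p)) p v = _
  rw [this]; rfl

lemma smooth_sw {f : Cn n × Cn n → ℂ} (hf : ContDiff ℝ (⊤ : ℕ∞) f) :
    ContDiff ℝ (⊤ : ℕ∞) (fun p : Cn n × Cn n => (starRingEnd ℂ) (f p.swap)) :=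
  (conjCLE : ℂ →L[ℝ] ℂ).contDiff.comp (hf.comp (contDiff_snd.prodMk contDiff_fst))

lemma JJ.sw {N : ℕ} : ∀ {f : Cn n × Cn n → ℂ}, JJ N f →
    JJ N (fun p : Cn n × Cn n => (starRingEnd ℂ) (f p.swap)) := by
  induction N with
  | zero => intro f h; exact smooth_sw h
  | succ N ih =>
    intro f h
    refine ⟨smooth_sw h.1, ?_, fun v => ?_⟩
    · have := h.2.1
      simp [this]
    · simp only [fderiv_sw h.1]
      exact ih (h.2.2 v.swap)

lemma conc2 {N : ℕ} {u : Cn n × Cn n → ℂ} (hu : ContDiff ℝ (⊤ : ℕ∞) u)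
    (hs : ∀ p, u p = -(starRingEnd ℂ) (u p.swap)) (ε : ℝ) (j : Fin n)
    (h : JJ N (cd (dz ε j) u)) : JJ N (cd (dw (-ε) j) u) := by
  convert (h.sw).cmul (-1) using 1
  have hd : ∀ p v, fderiv ℝ u p v = -(starRingEnd ℂ) (fderiv ℝ u p.swap v.swap) := by
    intro p v
    rw [← fderiv_sw hu]
    conv_lhs => rw [show u = fun p => -(starRingEnd ℂ) (u p.swap) from funext hs]
    rw [fderiv_fun_neg]; rfl
  funext p
  rw [cd_dw, cd_dz, hd p, hd p]
  simp [map_ofNat]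
  ring

lemma conc3 (ε : Fin n → ℝ) (hε : ∀ j, ε j * ε j = 1) (N : ℕ) (u : Cn n × Cn n → ℂ) (hu : JJ N u)
    (hd : ∀ z, u (z, z) = 0) (h1 : ∀ j, JJ N (cd (dz (ε j) j) u))
    (h2 : ∀ j, JJ N (cd (dw (-ε j) j) u)) : JJ (N+1) u := by
  refine step3 (fun j => dz (ε j) j) (fun j => dw (-ε j) j) (fun j => dw (ε j) j)
    (fun j => dz (-ε j) j) {p | p.1 = p.2} rfl (span4 ε hε) ?_ N u hu ?_ h1 h2
  · intro f hf h0 j p hp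
    have key : ∀ v : Cn n, fderiv ℝ f p (v, v) = 0 := by
      intro v
      let S : Cn n →L[ℝ] (Cn n × Cn n) :=
        (ContinuousLinearMap.id ℝ (Cn n)).prod (ContinuousLinearMap.id ℝ (Cn n))
      have h1 : HasFDerivAt (fun z => f (S z)) ((fderiv ℝ f (S p.1)).comp S) p.1 :=
        (smooth_diff hf (S p.1)).hasFDerivAt.comp p.1 S.hasFDerivAt
      have h2 : (fun z => f (S z)) = fun _ => 0 := funext fun z => h0 _ rfl
      rw [h2] at h1
      have h3 := h1.unique (hasFDerivAt_const 0 p.1)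
      have h4 := congrArg (fun T => T v) h3
      have h5 : S p.1 = p := Prod.ext rfl hp
      rw [h5] at h4
      simpa [S] using h4
    constructor
    · simp [cd, dz, dw, key]
    · simp [cd, dz, dw, key]
  · rintro ⟨z, w⟩ h
    obtain rfl : z = w := h
    exact hd z
end conc

section fin
variable {n : ℕ}

def Qpsi (lam : Fin n → ℝ) : Cn n × Cn n → ℂ := fun p =>
  ∑ k, (I * ((|lam k| : ℝ) * ((zl k - wl k) p * cj (zl k - wl k) p))
    + I * ((lam k : ℝ) * (cj (zl k) p * wl k p - cj (wl k) p * zl k p)))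
def Qphi (lam : Fin n → ℝ) : Cn n × Cn n → ℂ := fun p =>
  ∑ k, ((lam k : ℝ) : ℂ) * (zl k p * cj (zl k) p)

lemma smooth_clm (l : (Cn n × Cn n) →L[ℝ] ℂ) : ContDiff ℝ (⊤ : ℕ∞) (fun p => l p) := l.contDiff

lemma smooth_psi1 (k : Fin n) : ContDiff ℝ (⊤ : ℕ∞)
    (fun p => (zl k - wl k) p * cj (zl k - wl k) p) := (smooth_clm _).mul (smooth_clm _)
lemma smooth_psi2 (k : Fin n) : ContDiff ℝ (⊤ : ℕ∞)
    (fun p => cj (zl k) p * wl k p - cj (wl k) p * zl k p) :=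
  ((smooth_clm _).mul (smooth_clm _)).sub ((smooth_clm _).mul (smooth_clm _))

lemma smooth_Qpsi (lam : Fin n → ℝ) : ContDiff ℝ (⊤ : ℕ∞) (Qpsi lam) :=
  ContDiff.sum fun k _ => (contDiff_const.mul (contDiff_const.mul (smooth_psi1 k))).add
    (contDiff_const.mul (contDiff_const.mul (smooth_psi2 k)))
lemma smooth_Qphi (lam : Fin n → ℝ) : ContDiff ℝ (⊤ : ℕ∞) (Qphi lam) :=
  ContDiff.sum fun k _ => contDiff_const.mul ((smooth_clm _).mul (smooth_clm _))

lemma cd_Qphi (lam : Fin n → ℝ) (δ : ℝ) (j : Fin n) (p : Cn n × Cn n) :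
    cd (dz δ j) (Qphi lam) p = lam j * ((1 - δ) / 2 * (starRingEnd ℂ) (p.1 j)
      + p.1 j * ((1 + δ) / 2)) := by
  unfold Qphi
  rw [cd_sum _ fun k => contDiff_const.mul ((smooth_clm _).mul (smooth_clm _))]
  simp only [cd_cmul ((smooth_clm _).mul (smooth_clm _)), cd_mul (smooth_clm _) (smooth_clm _),
    cd_clm]
  rw [Finset.sum_eq_single j]
  · simp [dz, map_ofNat]
    left
    linear_combination (δ / 2 * ((starRingEnd ℂ) (p.1 j) - p.1 j)) * I_mul_I
  · intro k _ hk
    simp [dz, hk]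
  · simp

lemma cd_Qpsi (lam : Fin n → ℝ) (δ : ℝ) (j : Fin n) (p : Cn n × Cn n) :
    cd (dz δ j) (Qpsi lam) p = I * (|lam j| : ℝ) * ((1 - δ) / 2 * (starRingEnd ℂ) (p.1 j - p.2 j)
      + (p.1 j - p.2 j) * ((1 + δ) / 2)) + I * lam j * ((1 + δ) / 2 * p.2 j
        - (1 - δ) / 2 * (starRingEnd ℂ) (p.2 j)) := by
  unfold Qpsi
  rw [cd_sum _ fun k => (contDiff_const.mul (contDiff_const.mul (smooth_psi1 k))).add
    (contDiff_const.mul (contDiff_const.mul (smooth_psi2 k)))]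
  have e : ∀ k, cd (dz δ j) (fun p => I * ((|lam k| : ℝ) * ((zl k - wl k) p * cj (zl k - wl k) p))
    + I * ((lam k : ℝ) * (cj (zl k) p * wl k p - cj (wl k) p * zl k p))) = _ := fun k => by
    rw [cd_add (contDiff_const.mul (contDiff_const.mul (smooth_psi1 k)))
      (contDiff_const.mul (contDiff_const.mul (smooth_psi2 k))),
      cd_cmul (contDiff_const.mul (smooth_psi1 k)), cd_cmul (smooth_psi1 k),
      cd_cmul (contDiff_const.mul (smooth_psi2 k)), cd_cmul (smooth_psi2 k),
      cd_mul (smooth_clm _) (smooth_clm _), cd_sub ((smooth_clm _).mul (smooth_clm _))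
      ((smooth_clm _).mul (smooth_clm _)), cd_mul (smooth_clm _) (smooth_clm _),
      cd_mul (smooth_clm _) (smooth_clm _)]
  simp only [e, cd_clm]
  rw [Finset.sum_eq_single j]
  · simp [dz, map_ofNat]
    linear_combination (I * (|lam j| : ℝ) * (δ / 2 * ((starRingEnd ℂ) (p.1 j) - (starRingEnd ℂ) (p.2 j))
      - δ / 2 * (p.1 j - p.2 j)) - I * lam j * (δ / 2 * p.2 j + δ / 2 * (starRingEnd ℂ) (p.2 j))) * I_mul_I
  · intro k _ hk
    simp [dz, hk]
  · simp

lemma wd_pair {f : Cn n × Cn n → ℂ} (hf : ContDiff ℝ (⊤ : ℕ∞) f) (p : Cn n × Cn n) (v : Cn n) :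
    fderiv ℝ (fun x => f (x, p.2)) p.1 v = fderiv ℝ f p (v, 0) := by
  have h1 : HasFDerivAt (fun x : Cn n => (x, p.2)) (ContinuousLinearMap.inl ℝ (Cn n) (Cn n)) p.1 :=
    hasFDerivAt_prodMk_left p.1 p.2
  have h2 : HasFDerivAt f (fderiv ℝ f p) ((fun x : Cn n => (x, p.2)) p.1) :=
    (smooth_diff hf p).hasFDerivAt
  have h3 := h2.comp p.1 h1
  change fderiv ℝ (f ∘ fun x : Cn n => (x, p.2)) p.1 v = _
  rw [h3.fderiv]; simp

lemma wdb_eq {f : Cn n × Cn n → ℂ} (hf : ContDiff ℝ (⊤ : ℕ∞) f) (p : Cn n × Cn n) (j : Fin n) :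
    wdb j (fun x => f (x, p.2)) p.1 = cd (dz 1 j) f p := by
  rw [cd_dz, wdb, wd_pair hf, wd_pair hf]; simp

lemma wd_eq {f : Cn n × Cn n → ℂ} (hf : ContDiff ℝ (⊤ : ℕ∞) f) (p : Cn n × Cn n) (j : Fin n) :
    wd j (fun x => f (x, p.2)) p.1 = cd (dz (-1) j) f p := by
  rw [cd_dz, wd, wd_pair hf, wd_pair hf]; simp; ring

/-- Data extracted from admissibility. -/
lemma adm_data (lam : Fin n → ℝ) (φ : Cn n → ℝ) (hφ : PhiOK lam φ) (ψ : Cn n → Cn n → ℂ)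
    (h : Admissible lam φ ψ) :
    ContDiff ℝ (⊤ : ℕ∞) (fun p : Cn n × Cn n => ψ p.1 p.2) ∧
    ContDiff ℝ (⊤ : ℕ∞) (fun p : Cn n × Cn n => (φ p.1 : ℂ)) ∧
    JJ 3 (fun p : Cn n × Cn n => ψ p.1 p.2 - Qpsi lam p) ∧
    JJ 3 (fun p : Cn n × Cn n => (φ p.1 : ℂ) - Qphi lam p) ∧
    ∀ N, JJ N (fun p : Cn n × Cn n => ∑ j,
      (I * cd (dz 1 j) (fun p : Cn n × Cn n => ψ p.1 p.2) p
        + cd (dz 1 j) (fun p : Cn n × Cn n => (φ p.1 : ℂ)) p) *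
      (-I * cd (dz (-1) j) (fun p : Cn n × Cn n => ψ p.1 p.2) p
        + cd (dz (-1) j) (fun p : Cn n × Cn n => (φ p.1 : ℂ)) p)) := by
  obtain ⟨hs, -, -, -, -, -, -, -, hd, he⟩ := h
  have hΦ : ContDiff ℝ (⊤ : ℕ∞) (fun p : Cn n × Cn n => (φ p.1 : ℂ)) :=
    ofRealCLM.contDiff.comp (hφ.1.comp contDiff_fst)
  refine ⟨hs, hΦ, ?_, ?_, ?_⟩
  · refine JJ3_of_isBigO (hs.sub (smooth_Qpsi lam)) ?_
    refine he.congr_left fun p => ?_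
    congr 1
    simp only [Qpsi, Finset.sum_add_distrib, Finset.mul_sum]
    congr 1
    · refine Finset.sum_congr rfl fun j _ => ?_
      push_cast
      rw [← mul_conj]; simp
  · refine JJ3_of_isBigO (hΦ.sub (smooth_Qphi lam)) ?_
    have h1 : Filter.Tendsto (fun p : Cn n × Cn n => p.1) (nhds 0) (nhds 0) :=
      continuous_fst.tendsto' _ _ rfl
    have h2 := hφ.2.comp_tendsto h1
    have h3 : ((fun z : Cn n => ‖z‖ ^ 3) ∘ fun p : Cn n × Cn n => p.1) =O[nhds 0]
        fun p : Cn n × Cn n => ‖p‖ ^ 3 := by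
      refine IsBigO.of_bound 1 (Filter.Eventually.of_forall fun p => ?_)
      simp only [Function.comp, norm_pow, norm_norm, one_mul]
      exact pow_le_pow_left₀ (norm_nonneg _) (norm_fst_le p) 3
    refine IsBigO.trans ?_ h3
    refine IsBigO.trans (IsBigO.of_bound 1 (Filter.Eventually.of_forall fun p => ?_)) h2
    simp only [Function.comp, one_mul, Qphi]
    rw [← norm_real]
    refine le_of_eq (congrArg _ ?_)
    push_cast
    congr 1
    refine Finset.sum_congr rfl fun j _ => ?_
    rw [← mul_conj]; simp
  · intro N
    rw [JJ_iff N]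
    · intro m _
      rw [← hd m 0]
      congr 1
      funext p
      refine Finset.sum_congr rfl fun j _ => ?_
      rw [← wdb_eq hs, ← wd_eq hs, ← wdb_eq hΦ, ← wd_eq hΦ]
      rfl
    · refine ContDiff.sum fun j _ => ContDiff.mul ?_ ?_
      · exact (contDiff_const.mul (cd_smooth hs _)).add (cd_smooth hΦ _)
      · exact (contDiff_const.mul (cd_smooth hs _)).add (cd_smooth hΦ _)

lemma lead (lam : Fin n → ℝ) (Ψ Φ : Cn n × Cn n → ℂ) (hΨ : ContDiff ℝ (⊤ : ℕ∞) Ψ)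
    (hΦ : ContDiff ℝ (⊤ : ℕ∞) Φ) (h1 : JJ 3 (fun p => Ψ p - Qpsi lam p))
    (h2 : JJ 3 (fun p => Φ p - Qphi lam p)) (j : Fin n) :
    JJ 2 (fun p => (I * cd (dz 1 j) Ψ p + cd (dz 1 j) Φ p)
      - (lam j - |lam j| : ℝ) * (zl j - wl j) p) ∧
    JJ 2 (fun p => (-I * cd (dz (-1) j) Ψ p + cd (dz (-1) j) Φ p)
      - (lam j + |lam j| : ℝ) * cj (zl j - wl j) p) := by
  have key : ∀ δ : ℝ, ∀ c : ℂ, JJ 2 (fun p => c * (cd (dz δ j) Ψ p - cd (dz δ j) (Qpsi lam) p)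
      + (cd (dz δ j) Φ p - cd (dz δ j) (Qphi lam) p)) := by
    intro δ c
    have a : JJ 2 _ := h1.cd (dz δ j)
    have b : JJ 2 _ := h2.cd (dz δ j)
    rw [cd_sub hΨ (smooth_Qpsi lam)] at a
    rw [cd_sub hΦ (smooth_Qphi lam)] at b
    exact (a.cmul c).add b
  constructor
  · convert key 1 I using 2 with p
    rw [cd_Qpsi, cd_Qphi]
    simp
    linear_combination ((|lam j| : ℝ) * (p.1 j - p.2 j) + lam j * p.2 j) * I_mul_I
  · convert key (-1) (-I) using 2 with p
    rw [cd_Qpsi, cd_Qphi]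
    simp
    linear_combination (-(|lam j| : ℝ) * ((starRingEnd ℂ) (p.1 j) - (starRingEnd ℂ) (p.2 j))
      + lam j * (starRingEnd ℂ) (p.2 j)) * I_mul_I

end fin

/-- two admissible phases differ to infinite order at `(0,0)`;
the Taylor expansion of an admissible phase at `(0,0)` is uniquely determined. -/
theorem statement10 (n q : ℕ) (hn : 1 ≤ n) (hq : q ≤ n) (lam : Fin n → ℝ)
    (hneg : ∀ j : Fin n, (j : ℕ) < q → lam j < 0)
    (hpos : ∀ j : Fin n, q ≤ (j : ℕ) → 0 < lam j)
    (φ : Cn n → ℝ) (hφ : PhiOK lam φ)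
    (ψ₁ ψ₂ : Cn n → Cn n → ℂ)
    (h₁ : Admissible lam φ ψ₁) (h₂ : Admissible lam φ ψ₂) :
    ∀ m : ℕ,
      iteratedFDeriv ℝ m (fun p : Cn n × Cn n => ψ₁ p.1 p.2 - ψ₂ p.1 p.2)
        (0, 0) = 0 := by
  
  have I3 : I ^ 3 = -I := by rw [pow_succ, I_sq]; ring
  have hlam : ∀ j, lam j ≠ 0 := fun j => by
    rcases lt_or_ge (j : ℕ) q with h | h
    · exact (hneg j h).ne
    · exact (hpos j h).ne'
  obtain ⟨hs1, hΦ, q1, qφ, d1⟩ := adm_data lam φ hφ ψ₁ h₁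
  obtain ⟨hs2, -, q2, -, d2⟩ := adm_data lam φ hφ ψ₂ h₂
  have L1 := fun j => (lead lam _ _ hs1 hΦ q1 qφ j).2
  have L2 := fun j => (lead lam _ _ hs2 hΦ q2 qφ j).1
  obtain ⟨-, a1, b1, -⟩ := h₁
  obtain ⟨-, a2, b2, -⟩ := h₂
  set Ψ₁ : Cn n × Cn n → ℂ := fun p => ψ₁ p.1 p.2 with hΨ₁
  set Ψ₂ : Cn n × Cn n → ℂ := fun p => ψ₂ p.1 p.2 with hΨ₂
  set Φ : Cn n × Cn n → ℂ := fun p => (φ p.1 : ℂ) with hΦdef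
  set u : Cn n × Cn n → ℂ := fun p => Ψ₁ p - Ψ₂ p with hu
  have hus : ContDiff ℝ (⊤ : ℕ∞) u := hs1.sub hs2
  have hcd : ∀ x p, cd x u p = cd x Ψ₁ p - cd x Ψ₂ p := fun x p => by
    rw [hu, cd_sub hs1 hs2]
  have hsw : ∀ p, u p = -(starRingEnd ℂ) (u p.swap) := fun p => by
    simp only [hu, hΨ₁, hΨ₂]
    rw [b1, b2]; simp; ring
  have hdiag : ∀ z, u (z, z) = 0 := fun z => by simp [hu, hΨ₁, hΨ₂, a1, a2]
  have h3 : JJ 3 u := by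
    convert q1.sub q2 using 2 with p
    simp [hu, hΨ₁, hΨ₂]
  let ε : Fin n → ℝ := fun j => if 0 < lam j then 1 else -1
  have hε : ∀ j, ε j * ε j = 1 := fun j => by
    simp only [ε]; split_ifs <;> norm_num
  have hstep : ∀ N, 3 ≤ N → JJ N u → JJ (N+1) u := by
    intro N hN huN
    have hX : ∀ j, JJ N (cd (dz (ε j) j) u) := by
      refine conc1 ε hε (fun j => |lam j|) (fun j => abs_pos.2 (hlam j)) N u huN ?_
      have t1 := (d1 (N+1)).sub (d2 (N+1))
      have t2 : JJ (N+1) (fun p => ∑ j,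
          ((cd (dz 1 j) u p) * ((-I * cd (dz (-1) j) Ψ₁ p + cd (dz (-1) j) Φ p)
            - (lam j + |lam j| : ℝ) * cj (zl j - wl j) p)
          + (-1) * (((I * cd (dz 1 j) Ψ₂ p + cd (dz 1 j) Φ p)
            - (lam j - |lam j| : ℝ) * (zl j - wl j) p) * (cd (dz (-1) j) u p)))) := by
        refine JJ.sum _ fun j _ => JJ.add ?_ (JJ.cmul _ ?_)
        · exact JJ.mul' (N+1) (N-1) 2 (by omega) (huN.cd _) (L1 j)
        · exact JJ.mul' (N+1) 2 (N-1) (by omega) (L2 j) (huN.cd _)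
      convert ((t1.cmul (-I)).sub t2).cmul (1/2) using 2 with p
      rw [← Finset.sum_sub_distrib, Finset.mul_sum, ← Finset.sum_sub_distrib, Finset.mul_sum]
      refine Finset.sum_congr rfl fun j _ => ?_
      by_cases hj : 0 < lam j
      · simp only [ε, hj, if_true, aa, abs_of_pos hj, hcd]
        simp
        ring_nf
        simp only [I_sq, I3]
        ring
      · have hj' : lam j < 0 := lt_of_le_of_ne (not_lt.1 hj) (hlam j)
        simp only [ε, hj, if_false, aa, abs_of_neg hj', hcd]
        simp
        ring_nf
        simp only [I_sq, I3]
        ring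
    exact conc3 ε hε N u huN hdiag hX fun j => conc2 hus hsw _ j (hX j)
  have hall : ∀ N, JJ (N+3) u := by
    intro N
    induction N with
    | zero => exact h3
    | succ N ih => exact (hstep (N+3) (by omega) ih)
  intro m
  exact (JJ_iff (m+1+3) u hus).1 (hall (m+1)) m (by omega)
end
end

section
/- For every smooth B : ℂ^n → ⋀^q ℂ^n and every z ∈ ℂ^n: e^{−ikψ(z)} · □_k(e^{ikψ} B)(z) = k^2 Σ_{j=1}^n (i ∂ψ/∂z̄_j + ∂φ/∂z̄_j)(−i ∂ψ/∂z_j + ∂φ/∂z_j) B + k Σ_{j,t=1}^n [∂/∂z̄_j(−i ∂ψ/∂z_t + ∂φ/∂z_t)] (a_j a_t^*) B − k Σ_{j,t=1}^n [∂/∂z_t(i ∂ψ/∂z̄_j + ∂φ/∂z̄_j)] (a_t^* a_j) B + k Σ_{j=1}^n (−i ∂ψ/∂z_j + ∂φ/∂z_j) ∂B/∂z̄_j − k Σ_{j=1}^n (i ∂ψ/∂z̄_j + ∂φ/∂z̄_j) ∂B/∂z_j − Σ_{j=1}^n ∂^2B/∂z_j∂z̄_j, all evaluated at z. -/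
open Complex Asymptotics

attribute [local instance] Classical.propDecidable

noncomputable section

/-- The full exterior algebra `⋀^• ℂⁿ`, with orthonormal basis `ē_S` indexed by
subsets `S ⊆ {1,…,n}`, modelled as coefficient functions. -/
abbrev ExtA (n : ℕ) := Finset (Fin n) → ℂ

/-- The sign `(−1)^{#{s ∈ S : s < j}}`. -/
def sgnE {n : ℕ} (j : Fin n) (S : Finset (Fin n)) : ℂ :=
  (-1 : ℂ) ^ (S.filter fun s => s < j).card

/-- Left exterior multiplication `a_j = ē_j ∧ ·`. -/
def aOp {n : ℕ} (j : Fin n) (f : ExtA n) : ExtA n := fun S =>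
  if j ∈ S then sgnE j S * f (S.erase j) else 0

/-- Its Hermitian adjoint `a_j^*` (interior multiplication). -/
def aSt {n : ℕ} (j : Fin n) (f : ExtA n) : ExtA n := fun S =>
  if j ∈ S then 0 else sgnE j S * f (insert j S)

/-- Componentwise Wirtinger derivative `∂B/∂z_j` of a `⋀^•ℂⁿ`-valued map. -/
def wdE {n : ℕ} (j : Fin n) (B : Cn n → ExtA n) : Cn n → ExtA n := fun z S =>
  wd j (fun x => B x S) z

/-- Componentwise Wirtinger derivative `∂B/∂z̄_j` of a `⋀^•ℂⁿ`-valued map. -/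
def wdbE {n : ℕ} (j : Fin n) (B : Cn n → ExtA n) : Cn n → ExtA n := fun z S =>
  wdb j (fun x => B x S) z

/-- `∂̄_s u = Σ_j a_j (∂u/∂z̄_j + k (∂φ/∂z̄_j) u)`. -/
def dbarS {n : ℕ} (k : ℝ) (φ : Cn n → ℝ) (B : Cn n → ExtA n) : Cn n → ExtA n := fun z =>
  ∑ j : Fin n, aOp j (fun S => wdbE j B z S + (k : ℂ) * wdb j (cplx φ) z * B z S)

/-- `∂̄_s^* u = Σ_j a_j^* (−∂u/∂z_j + k (∂φ/∂z_j) u)`. -/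
def dbarSt {n : ℕ} (k : ℝ) (φ : Cn n → ℝ) (B : Cn n → ExtA n) : Cn n → ExtA n := fun z =>
  ∑ j : Fin n, aSt j (fun S => - wdE j B z S + (k : ℂ) * wd j (cplx φ) z * B z S)

/-- The Kodaira Laplacian `□_k = ∂̄_s ∂̄_s^* + ∂̄_s^* ∂̄_s`. -/
def boxK {n : ℕ} (k : ℝ) (φ : Cn n → ℝ) (B : Cn n → ExtA n) : Cn n → ExtA n := fun z =>
  dbarS k φ (dbarSt k φ B) z + dbarSt k φ (dbarS k φ B) z


abbrev Smo {n : ℕ} {E : Type} [NormedAddCommGroup E] [NormedSpace ℝ E] (f : Cn n → E) : Prop :=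
  ContDiff ℝ (⊤ : ℕ∞) f

def DD {n : ℕ} (c : ℂ) (j : Fin n) (f : Cn n → ℂ) : Cn n → ℂ := fun z =>
  (1 / 2 : ℂ) * (fderiv ℝ f z (Pi.single j 1) + c * fderiv ℝ f z (Pi.single j Complex.I))

def DE {n : ℕ} (c : ℂ) (j : Fin n) (B : Cn n → ExtA n) : Cn n → ExtA n := fun z S =>
  DD c j (fun x => B x S) z

theorem wd_eq_s12 {n : ℕ} (j : Fin n) (f : Cn n → ℂ) : wd j f = DD (-Complex.I) j f := by
  funext z; simp only [wd, DD]; ring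

theorem wdb_eq_s12 {n : ℕ} (j : Fin n) (f : Cn n → ℂ) : wdb j f = DD Complex.I j f := rfl

theorem wdE_eq {n : ℕ} (j : Fin n) (f : Cn n → ExtA n) : wdE j f = DE (-Complex.I) j f := by
  funext z S; simp only [wdE, DE, wd_eq_s12]

theorem wdbE_eq {n : ℕ} (j : Fin n) (f : Cn n → ExtA n) : wdbE j f = DE Complex.I j f := rfl

theorem Smo.dif {n : ℕ} {E : Type} [NormedAddCommGroup E] [NormedSpace ℝ E] {f : Cn n → E}
    (hf : Smo f) (z : Cn n) : DifferentiableAt ℝ f z :=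
  (ContDiff.differentiable hf (by simp)) z

theorem smo_fd {n : ℕ} {f : Cn n → ℂ} (hf : Smo f) (v : Cn n) :
    Smo (fun x => fderiv ℝ f x v) := by
  have h : ContDiff ℝ (⊤ : ℕ∞) (fderiv ℝ f) := ContDiff.fderiv_right hf (by simp)
  exact h.clm_apply contDiff_const

theorem smo_DD {n : ℕ} {f : Cn n → ℂ} (hf : Smo f) (c : ℂ) (j : Fin n) : Smo (DD c j f) := by
  have h1 := smo_fd hf (Pi.single j 1)
  have h2 := smo_fd hf (Pi.single j Complex.I)
  exact contDiff_const.mul (h1.add (contDiff_const.mul h2))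

theorem smo_comp {n : ℕ} {B : Cn n → ExtA n} (hB : Smo B) (S) : Smo (fun x => B x S) :=
  contDiff_pi.1 hB S

theorem smo_DE {n : ℕ} {B : Cn n → ExtA n} (hB : Smo B) (c : ℂ) (j : Fin n) : Smo (DE c j B) :=
  contDiff_pi.2 fun S => smo_DD (smo_comp hB S) c j

theorem DD_add {n : ℕ} {f g : Cn n → ℂ} (hf : Smo f) (hg : Smo g) (c : ℂ) (j : Fin n) (z) :
    DD c j (fun x => f x + g x) z = DD c j f z + DD c j g z := by
  simp only [DD, fderiv_fun_add (hf.dif z) (hg.dif z), _root_.add_apply]; ring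

theorem DD_mul {n : ℕ} {f g : Cn n → ℂ} (hf : Smo f) (hg : Smo g) (c : ℂ) (j : Fin n) (z) :
    DD c j (fun x => f x * g x) z = DD c j f z * g z + f z * DD c j g z := by
  simp only [DD, fderiv_fun_mul (hf.dif z) (hg.dif z), _root_.add_apply,
    _root_.smul_apply, smul_eq_mul]; ring

theorem DD_const {n : ℕ} (a : ℂ) (c : ℂ) (j : Fin n) (z) :
    DD c j (fun _ => a) z = 0 := by
  simp [DD]

theorem DD_cmul {n : ℕ} {g : Cn n → ℂ} (hg : Smo g) (a c : ℂ) (j : Fin n) (z) :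
    DD c j (fun x => a * g x) z = a * DD c j g z := by
  rw [DD_mul (f := fun _ => a) contDiff_const hg, DD_const]; ring

theorem DD_exp {n : ℕ} {g : Cn n → ℂ} (hg : Smo g) (a c : ℂ) (j : Fin n) (z) :
    DD c j (fun x => Complex.exp (a * g x)) z = Complex.exp (a * g z) * (a * DD c j g z) := by
  have h : HasFDerivAt (fun x => Complex.exp (a * g x))
      (Complex.exp (a * g z) • (a • fderiv ℝ g z)) z :=
    ((hg.dif z).hasFDerivAt.const_mul a).cexp
  simp only [DD, h.fderiv, _root_.smul_apply, smul_eq_mul]; ring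

theorem DD_comm {n : ℕ} {f : Cn n → ℂ} (hf : Smo f) (c d : ℂ) (j t : Fin n) (z) :
    DD c j (DD d t f) z = DD d t (DD c j f) z := by
  have hs : IsSymmSndFDerivAt ℝ f z :=
    (ContDiff.contDiffAt hf).isSymmSndFDerivAt (by simp; exact WithTop.coe_le_coe.2 le_top)
  have hd : DifferentiableAt ℝ (fderiv ℝ f) z := by
    have h : ContDiff ℝ (⊤ : ℕ∞) (fderiv ℝ f) := ContDiff.fderiv_right hf (by simp)
    exact (h.differentiable (by simp)) z
  have key : ∀ v w, fderiv ℝ (fun x => fderiv ℝ f x v) z w = fderiv ℝ (fderiv ℝ f) z w v := by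
    intro v w
    rw [fderiv_clm_apply hd (differentiableAt_const v)]
    simp
  have ex : ∀ (c d : ℂ) (j t : Fin n), DD c j (DD d t f) z = (1 / 2 : ℂ) * 
      (DD c j (fun x => fderiv ℝ f x (Pi.single t 1)) z
        + d * DD c j (fun x => fderiv ℝ f x (Pi.single t Complex.I)) z) := by
    intro c d j t
    have h1 := smo_fd hf (Pi.single t 1)
    have h2 := smo_fd hf (Pi.single t Complex.I)
    have h3 : Smo (fun x => d * fderiv ℝ f x (Pi.single t Complex.I)) := contDiff_const.mul h2
    rw [← DD_cmul h2, ← DD_add h1 h3, ← DD_cmul (h1.add h3)]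
    rfl
  rw [ex, ex]
  simp only [DD, key]
  rw [hs (Pi.single j 1) (Pi.single t 1), hs (Pi.single j 1) (Pi.single t Complex.I),
    hs (Pi.single j Complex.I) (Pi.single t 1), hs (Pi.single j Complex.I) (Pi.single t Complex.I)]
  ring

theorem DE_comm {n : ℕ} {B : Cn n → ExtA n} (hB : Smo B) (c d : ℂ) (j t : Fin n) (z) :
    DE c j (DE d t B) z = DE d t (DE c j B) z := by
  funext S
  exact DD_comm (smo_comp hB S) c d j t z

theorem DE_add {n : ℕ} {f g : Cn n → ExtA n} (hf : Smo f) (hg : Smo g) (c : ℂ) (j : Fin n) (z) :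
    DE c j (fun x => f x + g x) z = DE c j f z + DE c j g z := by
  funext S
  exact DD_add (smo_comp hf S) (smo_comp hg S) c j z

theorem DE_smul {n : ℕ} {f : Cn n → ℂ} {g : Cn n → ExtA n} (hf : Smo f) (hg : Smo g)
    (c : ℂ) (j : Fin n) (z) :
    DE c j (fun x => f x • g x) z = DD c j f z • g z + f z • DE c j g z := by
  funext S
  exact DD_mul hf (smo_comp hg S) c j z

theorem DE_csmul {n : ℕ} {g : Cn n → ExtA n} (a : ℂ) (hg : Smo g)
    (c : ℂ) (j : Fin n) (z) :
    DE c j (fun x => a • g x) z = a • DE c j g z := by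
  funext S
  exact DD_cmul (smo_comp hg S) a c j z

theorem smo_smul {n : ℕ} {f : Cn n → ℂ} {g : Cn n → ExtA n} (hf : Smo f) (hg : Smo g) :
    Smo (fun x => f x • g x) :=
  contDiff_pi.2 fun S => hf.mul (smo_comp hg S)

theorem smo_lin {n : ℕ} (L : ExtA n →ₗ[ℂ] ExtA n) {g : Cn n → ExtA n} (hg : Smo g) :
    Smo (fun x => L (g x)) :=
  (((L.restrictScalars ℝ).toContinuousLinearMap).contDiff).comp hg

theorem DE_lin {n : ℕ} (L : ExtA n →ₗ[ℂ] ExtA n) {g : Cn n → ExtA n} (hg : Smo g)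
    (c : ℂ) (j : Fin n) (z) :
    DE c j (fun x => L (g x)) z = L (DE c j g z) := by
  have key : ∀ (h : Cn n → ExtA n), Smo h → DE c j h z =
      (1 / 2 : ℂ) • (fderiv ℝ h z (Pi.single j 1) + c • fderiv ℝ h z (Pi.single j Complex.I)) := by
    intro h hh
    funext S
    have : fderiv ℝ (fun x => h x S) z =
        (ContinuousLinearMap.proj S).comp (fderiv ℝ h z) :=
      (((ContinuousLinearMap.proj (R := ℝ) (φ := fun _ : Finset (Fin n) => ℂ) S).hasFDerivAt).comp z
        (hh.dif z).hasFDerivAt).fderiv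
    simp [DE, DD, this]
  have h2 : fderiv ℝ (fun x => L (g x)) z =
      ((L.restrictScalars ℝ).toContinuousLinearMap).comp (fderiv ℝ g z) :=
    (((L.restrictScalars ℝ).toContinuousLinearMap.hasFDerivAt).comp z
        (hg.dif z).hasFDerivAt).fderiv
  rw [key _ (smo_lin L hg), key _ hg, h2, map_smul, map_add, map_smul]
  rfl

theorem DE_sum {n : ℕ} {g : Fin n → Cn n → ExtA n} (hg : ∀ t, Smo (g t))
    (c : ℂ) (j : Fin n) (z) (s : Finset (Fin n)) :
    DE c j (fun x => ∑ t ∈ s, g t x) z = ∑ t ∈ s, DE c j (g t) z := by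
  induction s using Finset.induction_on with
  | empty => funext S; simp [DE, DD_const]
  | insert a s ha ih =>
    simp only [Finset.sum_insert ha]
    rw [DE_add (hg a) (ContDiff.sum fun t _ => hg t), ih]

/-- general first order operator -/
def TT {n : ℕ} (c e : ℂ) (L : Fin n → ExtA n →ₗ[ℂ] ExtA n) (al : Fin n → Cn n → ℂ)
    (B : Cn n → ExtA n) : Cn n → ExtA n := fun z =>
  ∑ j, L j (e • DE c j B z + al j z • B z)

theorem smo_in {n : ℕ} (c e : ℂ) {a : Cn n → ℂ} (ha : Smo a)
    {B : Cn n → ExtA n} (hB : Smo B) (j : Fin n) : Smo (fun z => e • DE c j B z + a z • B z) :=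
  ContDiff.add (smo_smul (f := fun _ => e) contDiff_const (smo_DE hB c j)) (smo_smul ha hB)

theorem smo_TT {n : ℕ} (c e : ℂ) (L : Fin n → ExtA n →ₗ[ℂ] ExtA n) {al : Fin n → Cn n → ℂ}
    (ha : ∀ j, Smo (al j)) {B : Cn n → ExtA n} (hB : Smo B) : Smo (TT c e L al B) :=
  ContDiff.sum fun j _ => smo_lin (L j) (smo_in c e (ha j) hB j)

theorem TT_comp {n : ℕ} (c e c' e' : ℂ) (L L' : Fin n → ExtA n →ₗ[ℂ] ExtA n)
    {al be : Fin n → Cn n → ℂ} (ha : ∀ j, Smo (al j))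
    {B : Cn n → ExtA n} (hB : Smo B) (z) :
    TT c' e' L' be (TT c e L al B) z = ∑ j, ∑ t, L' j (L t (
      (e' * e) • DE c' j (DE c t B) z + (e' * DD c' j (al t) z) • B z
      + (e' * al t z) • DE c' j B z + (e * be j z) • DE c t B z + (be j z * al t z) • B z)) := by
  unfold TT
  refine Finset.sum_congr rfl fun j _ => ?_
  rw [DE_sum (g := fun t x => L t (e • DE c t B x + al t x • B x))
    (fun t => smo_lin (L t) (smo_in c e (ha t) hB t)), Finset.smul_sum, Finset.smul_sum,
    ← Finset.sum_add_distrib, map_sum]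
  refine Finset.sum_congr rfl fun t _ => ?_
  rw [DE_lin _ (smo_in c e (ha t) hB t), ← map_smul, ← map_smul, ← map_add,
    DE_add (smo_smul (f := fun _ => e) contDiff_const (smo_DE hB c t)) (smo_smul (ha t) hB),
    DE_csmul e (smo_DE hB c t), DE_smul (ha t) hB]
  congr 2
  module

theorem TT_conj {n : ℕ} (c e : ℂ) (L : Fin n → ExtA n →ₗ[ℂ] ExtA n)
    {al al' : Fin n → Cn n → ℂ} {E : Cn n → ℂ} (hE : Smo E)
    {B : Cn n → ExtA n} (hB : Smo B)
    (h : ∀ j z, e * DD c j E z + al j z * E z = E z * al' j z) :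
    TT c e L al (fun x => E x • B x) = fun x => E x • TT c e L al' B x := by
  funext z
  unfold TT
  rw [Finset.smul_sum]
  refine Finset.sum_congr rfl fun j _ => ?_
  rw [← map_smul, DE_smul hE hB]
  congr 1
  have h1 := h j z
  calc _ = (e * DD c j E z + al j z * E z) • B z + (e * E z) • DE c j B z := by module
    _ = _ := by rw [h1]; module

def aL {n : ℕ} (j : Fin n) : ExtA n →ₗ[ℂ] ExtA n where
  toFun := aOp j
  map_add' f g := by funext S; simp only [aOp, Pi.add_apply]; split_ifs <;> ring
  map_smul' c f := by
    funext S; simp only [aOp, Pi.smul_apply, smul_eq_mul, RingHom.id_apply]; split_ifs <;> ring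

def sL {n : ℕ} (j : Fin n) : ExtA n →ₗ[ℂ] ExtA n where
  toFun := aSt j
  map_add' f g := by funext S; simp only [aSt, Pi.add_apply]; split_ifs <;> ring
  map_smul' c f := by
    funext S; simp only [aSt, Pi.smul_apply, smul_eq_mul, RingHom.id_apply]; split_ifs <;> ring

theorem sgn_insert {n : ℕ} (j t : Fin n) (S : Finset (Fin n)) (h : t ∉ S) :
    sgnE j (insert t S) = (if t < j then -1 else 1) * sgnE j S := by
  unfold sgnE
  rw [Finset.filter_insert]
  split_ifs with h1
  · rw [Finset.card_insert_of_notMem (by simp [h]), pow_succ]; ring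
  · simp

theorem sgn_sq {n : ℕ} (j : Fin n) (S : Finset (Fin n)) : sgnE j S * sgnE j S = 1 := by
  unfold sgnE
  rw [← mul_pow]; simp

theorem anti {n : ℕ} (j t : Fin n) (f : ExtA n) :
    aOp j (aSt t f) + aSt t (aOp j f) = if j = t then f else 0 := by
  funext S
  by_cases hjt : j = t
  · subst hjt
    simp only [aOp, aSt, Pi.add_apply, if_true]
    by_cases hj : j ∈ S
    · have h1 : S = insert j (S.erase j) := (Finset.insert_erase hj).symm
      have h2 : sgnE j S = sgnE j (S.erase j) := by
        conv_lhs => rw [h1]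
        rw [sgn_insert _ _ _ (Finset.notMem_erase j S)]; simp
      have := sgn_sq j (S.erase j)
      simp [hj, h2]
      rw [← mul_assoc, this, one_mul]
    · have := sgn_sq j S
      simp [hj, sgn_insert j j S hj]
      rw [← mul_assoc, this, one_mul]
  · simp only [aOp, aSt, Pi.add_apply, if_neg hjt, Pi.zero_apply]
    by_cases hj : j ∈ S
    · by_cases ht : t ∈ S
      · have : t ∈ S.erase j := Finset.mem_erase.2 ⟨fun h => hjt h.symm, ht⟩
        simp [ht, this]
      · have h0 : t ∉ S.erase j := fun h => ht (Finset.mem_of_mem_erase h)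
        have h3 : (insert t S).erase j = insert t (S.erase j) :=
          Finset.erase_insert_of_ne (fun h => hjt h.symm)
        have h4 : sgnE t S = (if j < t then -1 else 1) * sgnE t (S.erase j) := by
          conv_lhs => rw [← Finset.insert_erase hj]
          exact sgn_insert _ _ _ (Finset.notMem_erase j S)
        rw [if_pos hj, if_neg h0, if_neg ht, if_pos (Finset.mem_insert_of_mem hj), h3, h4,
          sgn_insert j t S ht]
        rcases lt_or_gt_of_ne hjt with h | h
        · rw [if_pos h, if_neg h.le.not_gt]; ring
        · rw [if_pos h, if_neg h.le.not_gt]; ring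
    · have : j ∉ insert t S := by simp [hj, hjt]
      simp [hj, this]

theorem dbarS_eq {n : ℕ} (k : ℝ) (φ : Cn n → ℝ) (B : Cn n → ExtA n) :
    dbarS k φ B = TT Complex.I 1 aL (fun j z => (k : ℂ) * wdb j (cplx φ) z) B := by
  funext z
  unfold dbarS TT
  refine Finset.sum_congr rfl fun j _ => ?_
  rw [one_smul]; rfl

theorem dbarSt_eq {n : ℕ} (k : ℝ) (φ : Cn n → ℝ) (B : Cn n → ExtA n) :
    dbarSt k φ B = TT (-Complex.I) (-1) sL (fun j z => (k : ℂ) * wd j (cplx φ) z) B := by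
  funext z
  unfold dbarSt TT
  refine Finset.sum_congr rfl fun j _ => ?_
  rw [neg_one_smul, wdE_eq]; rfl

/-- the conjugated Laplacian `e^{−ikψ} □_k (e^{ikψ} B)`. -/
theorem statement12 (n q : ℕ) (hn : 1 ≤ n) (hq : q ≤ n) (k : ℝ)
    (φ : Cn n → ℝ) (hφ : ContDiff ℝ (⊤ : ℕ∞) φ)
    (ψ : Cn n → ℂ) (hψ : ContDiff ℝ (⊤ : ℕ∞) ψ)
    (B : Cn n → ExtA n) (hB : ContDiff ℝ (⊤ : ℕ∞) B) (z : Cn n) :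
    Complex.exp (- (k : ℂ) * Complex.I * ψ z) •
        boxK k φ (fun x => Complex.exp ((k : ℂ) * Complex.I * ψ x) • B x) z =
      ((k : ℂ) ^ 2 *
          ∑ j : Fin n,
            (Complex.I * wdb j ψ z + wdb j (cplx φ) z) *
              (- Complex.I * wd j ψ z + wd j (cplx φ) z)) • B z
      + (k : ℂ) • ∑ j : Fin n, ∑ t : Fin n,
          (wdb j (fun x => - Complex.I * wd t ψ x + wd t (cplx φ) x) z) •
            aOp j (aSt t (B z))
      - (k : ℂ) • ∑ j : Fin n, ∑ t : Fin n,
          (wd t (fun x => Complex.I * wdb j ψ x + wdb j (cplx φ) x) z) •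
            aSt t (aOp j (B z))
      + (k : ℂ) • ∑ j : Fin n,
          (- Complex.I * wd j ψ z + wd j (cplx φ) z) • wdbE j B z
      - (k : ℂ) • ∑ j : Fin n,
          (Complex.I * wdb j ψ z + wdb j (cplx φ) z) • wdE j B z
      - ∑ j : Fin n, wdE j (wdbE j B) z := by
  have hc : Smo (cplx φ) := Complex.ofRealCLM.contDiff.comp hφ
  have hE : Smo (fun x => Complex.exp ((k : ℂ) * Complex.I * ψ x)) :=
    ContDiff.cexp (contDiff_const.mul hψ)
  set α : Fin n → Cn n → ℂ := fun j x => Complex.I * wdb j ψ x + wdb j (cplx φ) x with hα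
  set β : Fin n → Cn n → ℂ := fun j x => - Complex.I * wd j ψ x + wd j (cplx φ) x with hβ
  have sα : ∀ j, Smo (α j) := fun j =>
    (contDiff_const.mul (smo_DD hψ Complex.I j)).add (smo_DD hc Complex.I j)
  have sβ : ∀ j, Smo (β j) := fun j => by
    simp only [hβ, wd_eq_s12]
    exact (contDiff_const.mul (smo_DD hψ _ j)).add (smo_DD hc _ j)
  have skα : ∀ j, Smo (fun z => (k : ℂ) * α j z) := fun j => contDiff_const.mul (sα j)
  have skβ : ∀ j, Smo (fun z => (k : ℂ) * β j z) := fun j => contDiff_const.mul (sβ j)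
  have c1 : ∀ u : Cn n → ExtA n, Smo u →
      dbarS k φ (fun x => Complex.exp ((k : ℂ) * Complex.I * ψ x) • u x) =
      fun x => Complex.exp ((k : ℂ) * Complex.I * ψ x) •
        TT Complex.I 1 aL (fun j z => (k : ℂ) * α j z) u x := by
    intro u hu
    rw [dbarS_eq]
    refine TT_conj _ _ _ hE hu fun j z => ?_
    rw [DD_exp hψ]
    simp only [hα, wdb_eq_s12]; ring
  have c2 : ∀ u : Cn n → ExtA n, Smo u →
      dbarSt k φ (fun x => Complex.exp ((k : ℂ) * Complex.I * ψ x) • u x) =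
      fun x => Complex.exp ((k : ℂ) * Complex.I * ψ x) •
        TT (-Complex.I) (-1) sL (fun j z => (k : ℂ) * β j z) u x := by
    intro u hu
    rw [dbarSt_eq]
    refine TT_conj _ _ _ hE hu fun j z => ?_
    rw [DD_exp hψ]
    simp only [hβ, wd_eq_s12]; ring
  have hbox : Complex.exp (- (k : ℂ) * Complex.I * ψ z) •
        boxK k φ (fun x => Complex.exp ((k : ℂ) * Complex.I * ψ x) • B x) z =
      TT Complex.I 1 aL (fun j z => (k : ℂ) * α j z)
        (TT (-Complex.I) (-1) sL (fun j z => (k : ℂ) * β j z) B) z +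
      TT (-Complex.I) (-1) sL (fun j z => (k : ℂ) * β j z)
        (TT Complex.I 1 aL (fun j z => (k : ℂ) * α j z) B) z := by
    unfold boxK
    rw [c1 B hB, c2 B hB, c1 _ (smo_TT _ _ _ skβ hB), c2 _ (smo_TT _ _ _ skα hB)]
    simp only
    rw [← smul_add, smul_smul, ← Complex.exp_add]
    have : -(k : ℂ) * Complex.I * ψ z + (k : ℂ) * Complex.I * ψ z = 0 := by ring
    rw [this, Complex.exp_zero, one_smul]
  rw [hbox, TT_comp _ _ _ _ _ _ skβ hB, TT_comp _ _ _ _ _ _ skα hB]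
  conv_lhs => enter [2]; rw [Finset.sum_comm]
  rw [← Finset.sum_add_distrib]
  have hin : ∀ j, ∀ t, aL j (sL t (
      ((1 : ℂ) * -1) • DE Complex.I j (DE (-Complex.I) t B) z
      + (1 * DD Complex.I j (fun z => (k : ℂ) * β t z) z) • B z
      + (1 * ((k : ℂ) * β t z)) • DE Complex.I j B z
      + (-1 * ((k : ℂ) * α j z)) • DE (-Complex.I) t B z
      + ((k : ℂ) * α j z * ((k : ℂ) * β t z)) • B z))
      + sL t (aL j (
      ((-1 : ℂ) * 1) • DE (-Complex.I) t (DE Complex.I j B) z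
      + (-1 * DD (-Complex.I) t (fun z => (k : ℂ) * α j z) z) • B z
      + (-1 * ((k : ℂ) * α j z)) • DE (-Complex.I) t B z
      + (1 * ((k : ℂ) * β t z)) • DE Complex.I j B z
      + ((k : ℂ) * β t z * ((k : ℂ) * α j z)) • B z))
      = (k : ℂ) • (wdb j (β t) z • aOp j (aSt t (B z)))
        - (k : ℂ) • (wd t (α j) z • aSt t (aOp j (B z)))
        + if j = t then ((k : ℂ) ^ 2 * (α j z * β t z)) • B z + (k : ℂ) • (β t z • wdbE j B z)
          - (k : ℂ) • (α j z • wdE t B z) - wdE t (wdbE j B) z else 0 := by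
    intro j t
    rw [DE_comm hB Complex.I, DD_cmul (sα j), DD_cmul (sβ t)]
    simp only [wdE_eq, wdbE_eq, wd_eq_s12, wdb_eq_s12]
    set C : ExtA n := ((k : ℂ) ^ 2 * (α j z * β t z)) • B z + (k : ℂ) • (β t z • DE Complex.I j B z)
          - (k : ℂ) • (α j z • DE (-Complex.I) t B z) - DE (-Complex.I) t (DE Complex.I j B) z
      with hC
    rw [← anti j t C]
    change _ = (k : ℂ) • (DD Complex.I j (β t) z • aL j (sL t (B z)))
        - (k : ℂ) • (DD (-Complex.I) t (α j) z • sL t (aL j (B z)))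
        + (aL j (sL t C) + sL t (aL j C))
    have e1 : ((1 : ℂ) * -1) • DE (-Complex.I) t (DE Complex.I j B) z
      + (1 * ((k : ℂ) * DD Complex.I j (β t) z)) • B z
      + (1 * ((k : ℂ) * β t z)) • DE Complex.I j B z
      + (-1 * ((k : ℂ) * α j z)) • DE (-Complex.I) t B z
      + ((k : ℂ) * α j z * ((k : ℂ) * β t z)) • B z
      = C + (k : ℂ) • (DD Complex.I j (β t) z • B z) := by rw [hC]; module
    have e2 : ((-1 : ℂ) * 1) • DE (-Complex.I) t (DE Complex.I j B) z
      + (-1 * ((k : ℂ) * DD (-Complex.I) t (α j) z)) • B z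
      + (-1 * ((k : ℂ) * α j z)) • DE (-Complex.I) t B z
      + (1 * ((k : ℂ) * β t z)) • DE Complex.I j B z
      + ((k : ℂ) * β t z * ((k : ℂ) * α j z)) • B z
      = C - (k : ℂ) • (DD (-Complex.I) t (α j) z • B z) := by rw [hC]; module
    rw [e1, e2]
    simp only [map_add, map_sub, map_smul]
    abel
  simp only [← Finset.sum_add_distrib]
  rw [Finset.sum_congr rfl fun j _ => Finset.sum_congr rfl fun t _ => hin j t]
  simp only [Finset.sum_add_distrib, Finset.sum_sub_distrib, Finset.sum_ite_eq, Finset.mem_univ,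
    if_true, Finset.smul_sum, Finset.mul_sum, Finset.sum_smul]
  abel
end
end
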